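/- Let G be an n-vertex graph whose depth-1 minors all have edge density at most c and which excludes K_{3,t} as a depth-1 minor, for constants c ≥ 1, t ≥ 3. Then the modified Lenzen et al. algorithm (with threshold 2c in Phase 1) outputs a dominating set of size at most (6c²t + (2t+5)c + 4)·γ(G). -/

import Mathlib

open Set

/-- The closed neighborhood `N[v]` of a vertex. -/
def closedNbr {V : Type} (G : SimpleGraph V) (v : V) : Set V :=
  insert v (G.neighborSet v)

/-- `N[A] = ⋃ a ∈ A, N[a]`. -/
def closedNbrs {V : Type} (G : SimpleGraph V) (A : Set V) : Set V :=
  ⋃ a ∈ A, closedNbr G a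

/-- `D` is a dominating set of `G`. -/
def IsDominatingSet {V : Type} (G : SimpleGraph V) (D : Set V) : Prop :=
  ∀ v : V, v ∈ closedNbrs G D

/-- The domination number `γ(G)`. -/
noncomputable def gamma {V : Type} [Fintype V] (G : SimpleGraph V) : ℕ :=
  sInf {n | ∃ D : Set V, IsDominatingSet G D ∧ D.ncard = n}

/-- `S` induces a star in `G`. -/
def IsStarIn {V : Type} (G : SimpleGraph V) (S : Set V) : Prop :=
  ∃ c ∈ S, ∀ v ∈ S, v = c ∨ G.Adj c v

/-- `H` is a depth-1 minor of `G`. -/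
def IsDepth1Minor {V W : Type} (G : SimpleGraph V) (H : SimpleGraph W) : Prop :=
  ∃ B : W → Set V,
    (∀ w, IsStarIn G (B w)) ∧
    (Pairwise fun w₁ w₂ => Disjoint (B w₁) (B w₂)) ∧
    ∀ ⦃w₁ w₂⦄, H.Adj w₁ w₂ → ∃ v₁ ∈ B w₁, ∃ v₂ ∈ B w₂, G.Adj v₁ v₂

theorem ncard_biUnion_le_real {V W : Type} [Finite V] [Finite W] (S : Set W) (f : W → Set V) (k : ℝ)
    (h : ∀ i ∈ S, ((f i).ncard : ℝ) ≤ k) :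
    ((⋃ i ∈ S, f i).ncard : ℝ) ≤ k * S.ncard := by
  classical
  induction S, S.toFinite using Set.Finite.induction_on with
  | empty => simp
  | @insert a S ha hS ih =>
    have h1 := ih (fun i hi => h i (Set.mem_insert_of_mem _ hi))
    have h2 := h a (Set.mem_insert _ _)
    rw [Set.biUnion_insert, Set.ncard_insert_of_notMem ha hS]
    have h3 : ((f a ∪ ⋃ i ∈ S, f i).ncard : ℝ) ≤ (f a).ncard + (⋃ i ∈ S, f i).ncard := by
      exact_mod_cast Set.ncard_union_le _ _
    push_cast
    nlinarith

theorem ncard_insert_le_real {V : Type} [Finite V] (S : Set V) (a : V) :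
    ((insert a S).ncard : ℝ) ≤ S.ncard + 1 := by
  exact_mod_cast Set.ncard_insert_le a S

theorem ncard_le_real {V : Type} [Finite V] {S T : Set V} (h : S ⊆ T) :
    (S.ncard : ℝ) ≤ T.ncard := by
  exact_mod_cast Set.ncard_le_ncard h

theorem exists_low_degree {V : Type} [Fintype V] (G : SimpleGraph V) (c : ℝ)
    (hdens : ∀ (W : Type) [Fintype W] (H : SimpleGraph W), IsDepth1Minor G H →
      (H.edgeSet.ncard : ℝ) ≤ c * (Fintype.card W))
    (S : Set V) (hS : S.Nonempty) :
    ∃ v ∈ S, ((G.neighborSet v ∩ S).ncard : ℝ) ≤ 2 * c := by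
  classical
  by_contra! hcon
  have hm : IsDepth1Minor G (G.induce S) := by
    refine ⟨fun w => {w.1}, fun w => ⟨w.1, rfl, fun v hv => Or.inl hv⟩, ?_, ?_⟩
    · intro a b hab
      simpa [Subtype.ext_iff] using fun h => hab (Subtype.ext h)
    · intro a b hab
      exact ⟨a.1, rfl, b.1, rfl, hab⟩
  have h1 := hdens S (G.induce S) hm
  have h2 := (G.induce S).sum_degrees_eq_twice_card_edges
  have h3 : ∀ v : S, 2 * c < ((G.induce S).degree v : ℝ) := by
    intro v
    have h4 := hcon v.1 v.2
    have h5 : (G.neighborSet v.1 ∩ S).ncard = (G.induce S).degree v := by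
      rw [← SimpleGraph.card_neighborSet_eq_degree, ← Nat.card_eq_fintype_card,
        Nat.card_coe_set_eq, ← Set.ncard_image_of_injective _ Subtype.val_injective]
      congr 1
      ext x
      simp [and_comm]
    rwa [h5] at h4
  have : Nonempty S := hS.to_subtype
  have h6 : ∑ v : S, (2 * c) < ∑ v : S, ((G.induce S).degree v : ℝ) :=
    Finset.sum_lt_sum_of_nonempty Finset.univ_nonempty (fun v _ => h3 v)
  have h7 : (∑ v : S, ((G.induce S).degree v : ℝ)) = 2 * ((G.induce S).edgeFinset.card : ℝ) := by
    exact_mod_cast h2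
  rw [h7] at h6
  rw [← SimpleGraph.coe_edgeFinset, Set.ncard_coe_finset] at h1
  simp only [Finset.sum_const, Finset.card_univ, nsmul_eq_mul] at h6
  nlinarith

theorem exists_indep {V : Type} [Fintype V] (G : SimpleGraph V) (c : ℝ)
    (hdens : ∀ (W : Type) [Fintype W] (H : SimpleGraph W), IsDepth1Minor G H →
      (H.edgeSet.ncard : ℝ) ≤ c * (Fintype.card W)) (n : ℕ) :
    ∀ S : Set V, S.ncard = n → ∃ I ⊆ S, (∀ a ∈ I, ∀ b ∈ I, ¬ G.Adj a b) ∧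
      (S.ncard : ℝ) ≤ (2 * c + 1) * I.ncard := by
  induction n using Nat.strong_induction_on with
  | _ n ih =>
    intro S hSn
    rcases S.eq_empty_or_nonempty with rfl | hS
    · exact ⟨∅, subset_rfl, by simp, by simp⟩
    obtain ⟨v, hv, hdeg⟩ := exists_low_degree G c hdens S hS
    have hlt : (S \ closedNbr G v).ncard < n := by
      rw [← hSn]
      refine Set.ncard_lt_ncard ⟨Set.sdiff_subset, fun h => ?_⟩
      exact (h hv).2 (Set.mem_insert _ _)
    obtain ⟨I, hIS, hI, hcard⟩ := ih _ hlt (S \ closedNbr G v) rfl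
    have hnadj : ∀ b ∈ I, ¬ G.Adj v b := fun b hb hab => (hIS hb).2 (Or.inr hab)
    have hvI : v ∉ I := fun h => (hIS h).2 (Set.mem_insert _ _)
    refine ⟨insert v I, ?_, ?_, ?_⟩
    · exact Set.insert_subset hv (hIS.trans Set.sdiff_subset)
    · rintro a (rfl | ha) b (rfl | hb)
      · exact G.irrefl
      · exact hnadj b hb
      · exact fun h => hnadj a ha h.symm
      · exact hI a ha b hb
    · rw [Set.ncard_insert_of_notMem hvI]
      have hsub : S ⊆ insert v (G.neighborSet v ∩ S) ∪ (S \ closedNbr G v) := by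
        intro x hx
        by_cases hxv : x ∈ closedNbr G v
        · rcases hxv with rfl | h
          · exact Or.inl (Or.inl rfl)
          · exact Or.inl (Or.inr ⟨h, hx⟩)
        · exact Or.inr ⟨hx, hxv⟩
      have e1 := ncard_le_real hsub
      have e2 : ((insert v (G.neighborSet v ∩ S) ∪ (S \ closedNbr G v)).ncard : ℝ) ≤
          (insert v (G.neighborSet v ∩ S)).ncard + (S \ closedNbr G v).ncard := by
        exact_mod_cast Set.ncard_union_le _ _
      have e3 := ncard_insert_le_real (G.neighborSet v ∩ S) v
      push_cast
      nlinarith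

theorem indep_bound {V : Type} [Fintype V] (G : SimpleGraph V) (c : ℝ) (hc : 1 ≤ c)
    (hdens : ∀ (W : Type) [Fintype W] (H : SimpleGraph W), IsDepth1Minor G H →
      (H.edgeSet.ncard : ℝ) ≤ c * (Fintype.card W))
    (M : Set V) (cls : V → V) (hcls : ∀ u, cls u ∈ M) (hclsM : ∀ m ∈ M, cls m = m)
    (hadj : ∀ u, u = cls u ∨ G.Adj (cls u) u)
    (I : Set V) (hI : ∀ a ∈ I, ∀ b ∈ I, ¬ G.Adj a b) (hIM : ∀ a ∈ I, a ∉ M)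
    (hbig : ∀ a ∈ I, 2 * c < ((cls '' G.neighborSet a).ncard : ℝ)) :
    (I.ncard : ℝ) ≤ M.ncard := by
  classical
  let H : SimpleGraph (I ⊕ M) := SimpleGraph.fromRel
    (fun x y => ∃ (v : I) (m : M), x = Sum.inl v ∧ y = Sum.inr m ∧ m.1 ∈ cls '' G.neighborSet v.1)
  have hHadj : ∀ x y, H.Adj x y → (∃ (v : I) (m : M), ((x = Sum.inl v ∧ y = Sum.inr m) ∨
      (y = Sum.inl v ∧ x = Sum.inr m)) ∧ m.1 ∈ cls '' G.neighborSet v.1) := by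
    intro x y h
    rw [SimpleGraph.fromRel_adj] at h
    rcases h.2 with ⟨v, m, h1, h2, h3⟩ | ⟨v, m, h1, h2, h3⟩
    · exact ⟨v, m, Or.inl ⟨h1, h2⟩, h3⟩
    · exact ⟨v, m, Or.inr ⟨h1, h2⟩, h3⟩
  let B : I ⊕ M → Set V := Sum.elim (fun v => {v.1}) (fun m => {u | u ∉ I ∧ cls u = m.1})
  have key : ∀ (v : I) (m : M), m.1 ∈ cls '' G.neighborSet v.1 →
      ∃ u ∈ B (Sum.inr m), G.Adj v.1 u := by
    rintro v m ⟨u, hu, hum⟩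
    exact ⟨u, ⟨fun h => hI v.1 v.2 u h hu, hum⟩, hu⟩
  have hm : IsDepth1Minor G H := by
    refine ⟨B, ?_, ?_, ?_⟩
    · rintro (v | m)
      · exact ⟨v.1, rfl, fun u hu => Or.inl hu⟩
      · refine ⟨m.1, ⟨fun h => hIM _ h m.2, hclsM _ m.2⟩, ?_⟩
        rintro u ⟨_, hu⟩
        have := hadj u
        rwa [hu] at this
    · rintro (v | m) (v' | m') hne <;> rw [Set.disjoint_left] <;> intro x hx hx'
      · have e1 : x = v.1 := hx
        have e2 : x = v'.1 := hx'
        exact hne (congrArg _ (Subtype.ext (e1.symm.trans e2)))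
      · have e1 : x = v.1 := hx
        exact hx'.1 (e1 ▸ v.2)
      · have e1 : x = v'.1 := hx'
        exact hx.1 (e1 ▸ v'.2)
      · exact hne (congrArg _ (Subtype.ext (hx.2.symm.trans hx'.2)))
    · intro x y hxy
      obtain ⟨v, m, h | h, h3⟩ := hHadj x y hxy
      · obtain ⟨rfl, rfl⟩ := h
        obtain ⟨u, hu, hau⟩ := key v m h3
        exact ⟨v.1, rfl, u, hu, hau⟩
      · obtain ⟨rfl, rfl⟩ := h
        obtain ⟨u, hu, hau⟩ := key v m h3
        exact ⟨u, hu, v.1, rfl, hau.symm⟩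
  have h1 := hdens (I ⊕ M) H hm
  let P : Finset (Σ _ : I, M) := Finset.univ.sigma
    (fun v => Finset.univ.filter (fun m : M => m.1 ∈ cls '' G.neighborSet v.1))
  have hP : P.card ≤ H.edgeSet.ncard := by
    rw [← Set.ncard_coe_finset]
    refine Set.ncard_le_ncard_of_injOn (fun p => s(Sum.inl p.1, Sum.inr p.2)) ?_ ?_
    · rintro ⟨v, m⟩ hp
      have hp' : m.1 ∈ cls '' G.neighborSet v.1 := by
        simpa [P] using hp
      rw [SimpleGraph.mem_edgeSet, SimpleGraph.fromRel_adj]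
      exact ⟨by simp, Or.inl ⟨v, m, rfl, rfl, hp'⟩⟩
    · rintro ⟨v, m⟩ _ ⟨v', m'⟩ _ h
      simp at h
      obtain ⟨rfl, rfl⟩ := h
      rfl
  have hPc : (P.card : ℝ) = ∑ v : I, ((cls '' G.neighborSet v.1).ncard : ℝ) := by
    rw [Finset.card_sigma]
    push_cast
    refine Finset.sum_congr rfl fun v _ => ?_
    congr 1
    rw [← Set.ncard_coe_finset, ← Set.ncard_image_of_injective _ Subtype.val_injective]
    congr 1
    ext x
    constructor
    · rintro ⟨m, hm, rfl⟩
      simpa using hm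
    · intro hx
      have hxM : x ∈ M := by
        obtain ⟨u, _, rfl⟩ := hx
        exact hcls u
      exact ⟨⟨x, hxM⟩, by simpa using hx, rfl⟩
  have h2 : ∑ v : I, (2 * c) ≤ ∑ v : I, ((cls '' G.neighborSet v.1).ncard : ℝ) :=
    Finset.sum_le_sum (fun v _ => (hbig v.1 v.2).le)
  rw [← hPc] at h2
  have h3 : (P.card : ℝ) ≤ H.edgeSet.ncard := by exact_mod_cast hP
  simp only [Finset.sum_const, Finset.card_univ, nsmul_eq_mul] at h2
  rw [Fintype.card_sum] at h1
  push_cast at h1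
  have e1 : (Fintype.card I : ℝ) = I.ncard := by
    rw [← Nat.card_eq_fintype_card, Nat.card_coe_set_eq]
  have e2 : (Fintype.card M : ℝ) = M.ncard := by
    rw [← Nat.card_eq_fintype_card, Nat.card_coe_set_eq]
  rw [e1, e2] at h1
  rw [e1] at h2
  by_contra! hlt
  nlinarith

theorem common_nbrs_lt {V : Type} [Fintype V] (G : SimpleGraph V) (t : ℕ)
    (hex : ¬ IsDepth1Minor G (completeBipartiteGraph (Fin 3) (Fin t)))
    (w m a : V) (hwm : w ≠ m) (hwa : w ≠ a) (hma : m ≠ a) :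
    (G.neighborSet a ∩ (G.neighborSet m ∩ G.neighborSet w)).ncard < t := by
  classical
  by_contra! hge
  apply hex
  obtain ⟨T, hT, hTc⟩ := Set.exists_subset_card_eq hge
  have hcard : Fintype.card T = t := by
    rw [← Nat.card_eq_fintype_card, Nat.card_coe_set_eq, hTc]
  let e : Fin t ≃ T := (Fintype.equivFinOfCardEq hcard).symm
  let p : Fin 3 → V := ![w, m, a]
  have hp : Function.Injective p := by
    intro i j hij
    fin_cases i <;> fin_cases j <;> simp_all [p]
  have hadj : ∀ i j, G.Adj (p i) (e j).1 := by
    intro i j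
    have := hT (e j).2
    fin_cases i
    · exact this.2.2
    · exact this.2.1
    · exact this.1
  refine ⟨Sum.elim (fun i => {p i}) (fun j => {(e j).1}), ?_, ?_, ?_⟩
  · rintro (i | j)
    · exact ⟨_, rfl, fun v hv => Or.inl hv⟩
    · exact ⟨_, rfl, fun v hv => Or.inl hv⟩
  · rintro (i | i) (j | j) hne <;> simp only [Sum.elim_inl, Sum.elim_inr, Set.disjoint_singleton]
    · exact fun h => hne (congrArg _ (hp h))
    · exact (hadj i j).ne
    · exact (hadj j i).ne.symm
    · exact fun h => hne (congrArg _ (e.injective (Subtype.ext h)))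
  · rintro (i | i) (j | j) h
    · simp at h
    · exact ⟨_, rfl, _, rfl, hadj i j⟩
    · exact ⟨_, rfl, _, rfl, (hadj j i).symm⟩
    · simp at h

theorem mem_closedNbr_comm {V : Type} (G : SimpleGraph V) {v w : V} (h : v ∈ closedNbr G w) :
    w ∈ closedNbr G v := by
  rcases h with rfl | h
  · exact Or.inl rfl
  · exact Or.inr (SimpleGraph.Adj.symm h)

theorem mem_closedNbrs_iff {V : Type} (G : SimpleGraph V) {A : Set V} {v : V} :
    v ∈ closedNbrs G A ↔ ∃ a ∈ A, v ∈ closedNbr G a := by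
  simp [closedNbrs]

/-- Let `G` have all depth-1 minors of edge density at most `c` and exclude `K_{3,t}` as a
depth-1 minor.  The modified algorithm of Lenzen et al. computes: in Phase 1 the set `D` of all
vertices `v` whose open neighborhood cannot be dominated by at most `2c` other vertices; in
Phase 2, for each vertex `v ∈ R = V \ N[D]`, a dominator `dom v ∈ N[v]` of maximum residual
degree `|N[w] \ N[D]|`.  The output `D ∪ dom(R)` is a dominating set of size at most
`(6c²t + (2t+5)c + 4)·γ(G)`. -/
theorem stmt12 {V : Type} [Fintype V] (G : SimpleGraph V)
    (c : ℝ) (hc : 1 ≤ c) (t : ℕ) (ht : 3 ≤ t)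
    (hdens : ∀ (W : Type) [Fintype W] (H : SimpleGraph W), IsDepth1Minor G H →
      (H.edgeSet.ncard : ℝ) ≤ c * (Fintype.card W))
    (hex : ¬ IsDepth1Minor G (completeBipartiteGraph (Fin 3) (Fin t)))
    (D : Set V)
    (hD : D = {v | ¬ ∃ A : Set V, v ∉ A ∧ (A.ncard : ℝ) ≤ 2 * c ∧
      G.neighborSet v ⊆ closedNbrs G A})
    (R : Set V) (hR : R = Set.univ \ closedNbrs G D)
    (dom : V → V)
    (hdom : ∀ v ∈ R, dom v ∈ closedNbr G v ∧
      ∀ w ∈ closedNbr G v, (closedNbr G w \ closedNbrs G D).ncard ≤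
        (closedNbr G (dom v) \ closedNbrs G D).ncard) :
    IsDominatingSet G (D ∪ dom '' R) ∧
    ((D ∪ dom '' R).ncard : ℝ) ≤ (6 * c ^ 2 * t + (2 * t + 5) * c + 4) * gamma G := by
  classical
  refine ⟨?_, ?_⟩
  · intro v
    rw [mem_closedNbrs_iff]
    by_cases hv : v ∈ closedNbrs G D
    · obtain ⟨a, ha, h⟩ := (mem_closedNbrs_iff G).1 hv
      exact ⟨a, Or.inl ha, h⟩
    · have hvR : v ∈ R := by rw [hR]; exact ⟨trivial, hv⟩
      exact ⟨dom v, Or.inr ⟨v, hvR, rfl⟩, mem_closedNbr_comm G (hdom v hvR).1⟩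
  obtain ⟨M, hM, hMc⟩ : ∃ M : Set V, IsDominatingSet G M ∧ M.ncard = gamma G := by
    refine Nat.sInf_mem (s := {n | ∃ D : Set V, IsDominatingSet G D ∧ D.ncard = n}) ?_
    exact ⟨_, Set.univ, fun v => (mem_closedNbrs_iff G).2 ⟨v, trivial, Or.inl rfl⟩, rfl⟩
  rw [← hMc]
  -- the classes
  have hex_cls : ∀ u, ∃ m ∈ M, (u ∈ M → m = u) ∧ u ∈ closedNbr G m := by
    intro u
    by_cases hu : u ∈ M
    · exact ⟨u, hu, fun _ => rfl, Or.inl rfl⟩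
    · obtain ⟨m, hm, h⟩ := (mem_closedNbrs_iff G).1 (hM u)
      exact ⟨m, hm, fun h => absurd h hu, h⟩
  choose cls hcls hclsM hclsN using hex_cls
  let D2 : Set V := {v | v ∉ M ∧ 2 * c < ((cls '' G.neighborSet v).ncard : ℝ)}
  have hD2 : (D2.ncard : ℝ) ≤ (2 * c + 1) * M.ncard := by
    obtain ⟨I, hIS, hI, hcard⟩ := exists_indep G c hdens _ D2 rfl
    have := indep_bound G c hc hdens M cls hcls (fun m hm => hclsM m hm)
      (fun u => hclsN u) I hI (fun a ha => (hIS ha).1) (fun a ha => (hIS ha).2)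
    nlinarith
  have hDsub : D ⊆ M ∪ D2 := by
    intro v hv
    by_cases hvM : v ∈ M
    · exact Or.inl hvM
    refine Or.inr ⟨hvM, ?_⟩
    by_contra! hle
    rw [hD] at hv
    apply hv
    refine ⟨cls '' G.neighborSet v, ?_, hle, ?_⟩
    · rintro ⟨u, _, rfl⟩
      exact hvM (hcls u)
    · intro u hu
      exact (mem_closedNbrs_iff G).2 ⟨cls u, ⟨u, hu, rfl⟩, hclsN u⟩
  have hexA : ∀ m, ∃ A : Set V, (A.ncard : ℝ) ≤ 2 * c ∧
      (m ∉ D → m ∉ A ∧ G.neighborSet m ⊆ closedNbrs G A) := by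
    intro m
    by_cases hm : m ∈ D
    · exact ⟨∅, by simp; linarith, fun h => absurd hm h⟩
    · have hm' := hm
      rw [hD] at hm'
      simp only [Set.mem_ofPred_eq, not_not] at hm'
      obtain ⟨A, h1, h2, h3⟩ := hm'
      exact ⟨A, h2, fun _ => ⟨h1, h3⟩⟩
  choose A hAc hA using hexA
  have hUA : ((⋃ m ∈ M, A m).ncard : ℝ) ≤ 2 * c * M.ncard :=
    ncard_biUnion_le_real M A _ (fun m _ => hAc m)
  let X : Set V := M ∪ D2 ∪ ⋃ m ∈ M, A m
  have hX : (X.ncard : ℝ) ≤ M.ncard + D2.ncard + (⋃ m ∈ M, A m).ncard := by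
    have e1 := Set.ncard_union_le (M ∪ D2) (⋃ m ∈ M, A m)
    have e2 := Set.ncard_union_le M D2
    have : X.ncard ≤ M.ncard + D2.ncard + (⋃ m ∈ M, A m).ncard := by
      show (M ∪ D2 ∪ ⋃ m ∈ M, A m).ncard ≤ _
      omega
    exact_mod_cast this
  have ht0 : (0 : ℝ) ≤ t := Nat.cast_nonneg t
  -- residual degree of a vertex outside X
  have hres : ∀ w, w ∉ X →
      ((closedNbr G w \ closedNbrs G D).ncard : ℝ) ≤ (t * (2 * c) + 1) * (2 * c) + 1 := by
    intro w hw
    have hwM : w ∉ M := fun h => hw (Or.inl (Or.inl h))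
    have hwc : ((cls '' G.neighborSet w).ncard : ℝ) ≤ 2 * c := by
      by_contra! h
      exact hw (Or.inl (Or.inr ⟨hwM, h⟩))
    have hwA : ∀ m ∈ M, w ∉ A m := fun m hm h =>
      hw (Or.inr (Set.mem_biUnion hm h))
    let Q : Set V := cls '' G.neighborSet w \ D
    have hQc : (Q.ncard : ℝ) ≤ 2 * c := (ncard_le_real Set.sdiff_subset).trans hwc
    have hsub : closedNbr G w \ closedNbrs G D ⊆
        insert w (⋃ m ∈ Q, insert m (G.neighborSet m ∩ G.neighborSet w)) := by
      rintro u ⟨hu | hu, huD⟩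
      · exact Or.inl hu
      · refine Or.inr (Set.mem_biUnion (x := cls u) ⟨⟨u, hu, rfl⟩, ?_⟩ ?_)
        · exact fun h => huD ((mem_closedNbrs_iff G).2 ⟨_, h, hclsN u⟩)
        · rcases hclsN u with h | h
          · exact Or.inl h
          · exact Or.inr ⟨h, hu⟩
    have hcomm : ∀ m ∈ Q, ((insert m (G.neighborSet m ∩ G.neighborSet w)).ncard : ℝ) ≤
        t * (2 * c) + 1 := by
      rintro m ⟨⟨u, _, rfl⟩, hmD⟩
      have hmM := hcls u
      set m := cls u
      obtain ⟨hmA, hmN⟩ := hA m hmD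
      have hs2 : G.neighborSet m ∩ G.neighborSet w ⊆
          ⋃ a ∈ A m, insert a (G.neighborSet a ∩ (G.neighborSet m ∩ G.neighborSet w)) := by
        intro x hx
        obtain ⟨a, ha, hxa⟩ := (mem_closedNbrs_iff G).1 (hmN hx.1)
        refine Set.mem_biUnion ha ?_
        rcases hxa with h | h
        · exact Or.inl h
        · exact Or.inr ⟨h, hx⟩
      have hb := ncard_biUnion_le_real (A m)
        (fun a => insert a (G.neighborSet a ∩ (G.neighborSet m ∩ G.neighborSet w))) t ?_
      · have e1 := ncard_le_real hs2
        have e2 := ncard_insert_le_real (G.neighborSet m ∩ G.neighborSet w) m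
        have e3 := mul_le_mul_of_nonneg_left (hAc m) ht0
        linarith
      · intro a ha
        have h1 := common_nbrs_lt G t hex w m a (fun h => hwM (h ▸ hmM))
          (fun h => hwA m hmM (h ▸ ha)) (fun h => hmA (by rw [h] at ha ⊢; simpa [← h] using ha))
        have h2 := Set.ncard_insert_le a
          (G.neighborSet a ∩ (G.neighborSet m ∩ G.neighborSet w))
        exact_mod_cast (by omega : (insert a
          (G.neighborSet a ∩ (G.neighborSet m ∩ G.neighborSet w))).ncard ≤ t)
    have hb := ncard_biUnion_le_real Q _ _ hcomm
    have e1 := ncard_le_real hsub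
    have e2 := ncard_insert_le_real
      (⋃ m ∈ Q, insert m (G.neighborSet m ∩ G.neighborSet w)) w
    have e3 := mul_le_mul_of_nonneg_left hQc
      (by positivity : (0 : ℝ) ≤ t * (2 * c) + 1)
    linarith
  let RL : Set V := {r | r ∈ R ∧ dom r ∉ X}
  have hRL : (RL.ncard : ℝ) ≤ ((t * (2 * c) + 1) * (2 * c) + 1) * M.ncard := by
    have hs : RL ⊆ ⋃ m ∈ M, {r | r ∈ RL ∧ cls r = m} := fun r hr =>
      Set.mem_biUnion (hcls r) ⟨hr, rfl⟩
    refine (ncard_le_real hs).trans (ncard_biUnion_le_real M _ _ ?_)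
    intro m hm
    rcases Set.eq_empty_or_nonempty {r | r ∈ RL ∧ cls r = m} with h | ⟨r, hr, hrm⟩
    · rw [h]
      simp only [Set.ncard_empty, Nat.cast_zero]
      positivity
    · have h1 := hres (dom r) hr.2
      have h2 := (hdom r hr.1).2 m (mem_closedNbr_comm G (hrm ▸ hclsN r))
      have h3 : {r | r ∈ RL ∧ cls r = m} ⊆ closedNbr G m \ closedNbrs G D := by
        rintro s ⟨hs, rfl⟩
        refine ⟨hclsN s, ?_⟩
        have := hs.1
        rw [hR] at this
        exact this.2
      have h4 := ncard_le_real h3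
      have h5 : ((closedNbr G m \ closedNbrs G D).ncard : ℝ) ≤
        (closedNbr G (dom r) \ closedNbrs G D).ncard := by exact_mod_cast h2
      linarith
  have hout : D ∪ dom '' R ⊆ X ∪ dom '' RL := by
    rintro v (hv | ⟨r, hr, rfl⟩)
    · exact Or.inl (Or.inl (hDsub hv))
    · by_cases h : dom r ∈ X
      · exact Or.inl h
      · exact Or.inr ⟨r, ⟨hr, h⟩, rfl⟩
  have f1 := ncard_le_real hout
  have f2 : ((X ∪ dom '' RL).ncard : ℝ) ≤ X.ncard + RL.ncard := by
    have e1 := Set.ncard_union_le X (dom '' RL)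
    have e2 := Set.ncard_image_le (f := dom) RL.toFinite
    exact_mod_cast e1.trans (by omega)
  have f3 : ((D ∪ dom '' R).ncard : ℝ) ≤ (4 * c ^ 2 * t + 6 * c + 3) * M.ncard := by
    linarith
  refine f3.trans (mul_le_mul_of_nonneg_right ?_ (Nat.cast_nonneg _))
  have ht3 : (3 : ℝ) ≤ t := by exact_mod_cast ht
  have g1 : 0 ≤ c ^ 2 * t := by positivity
  have g2 : 3 * c ≤ t * c := by nlinarith
  nlinarith
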